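/- Let M ⊆ ℂⁿ be a compact set that is a C² embedded totally real submanifold: for every p ∈ M there exist an open neighborhood V of p in ℂⁿ, an integer d ≥ 0, an open set Ω ⊆ ℝᵈ, and a C² map g : Ω → ℂⁿ that is a homeomorphism onto M ∩ V and whose real Fréchet derivative Dg(t) is injective with totally real range at every t ∈ Ω. Then there exist an open set U ⊆ ℂⁿ with M ⊆ U and a C² function τ : U → ℝ such that τ ≥ 0 on U, τ⁻¹(0) = M, and τ is strongly plurisubharmonic at every point of U. -/

import Mathlib

/-!
Near a point of `M`, the inverse function theorem turns a chart `g` into a `C²` retraction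
`ϱ = g ∘ r` onto `M`. The map `x ↦ x - ϱ x` then cuts out `M`, and at points of `M` the kernel of
its derivative is contained in the totally real range of `Dg`. Finitely many such maps, cut off and
put together by compactness into the components of a single map `H`, define `M` in a neighborhood.
At a zero of `H` the Levi form of `‖H‖²` is `(‖DH v‖² + ‖DH (i v)‖²) / 2`, which is positive unless
both `v` and `i v` lie in the kernel of `DH`; strong plurisubharmonicity being an open condition,
`τ = ‖H‖²` has all the required properties near `M`.
-/

open Topology

/-- The Levi form of a function `ρ : E → ℝ` on a complex normed space `E` at a
point `x`, evaluated on a vector `v`: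
`L_ρ(x; v) = (1/4)(D²ρ(x)(v,v) + D²ρ(x)(iv,iv))`,
where `D²ρ(x)` is the second real Fréchet derivative. -/
noncomputable def leviForm {E : Type*} [NormedAddCommGroup E] [NormedSpace ℂ E]
    (ρ : E → ℝ) (x v : E) : ℝ :=
  (1/4) * (fderiv ℝ (fderiv ℝ ρ) x v v
    + fderiv ℝ (fderiv ℝ ρ) x (Complex.I • v) (Complex.I • v))

section DifferentialCalculus

theorem exists_contDiffAt_leftInverse {𝕜 E F : Type*} [RCLike 𝕜]
    [NormedAddCommGroup E] [NormedSpace 𝕜 E]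
    [NormedAddCommGroup F] [NormedSpace 𝕜 F] [CompleteSpace F]
    {n : WithTop ℕ∞} {g : F → E} {t : F} (hg : ContDiffAt 𝕜 n g t) (hn : n ≠ 0)
    (hinv : (fderiv 𝕜 g t).HasLeftInverse) :
    ∃ r : E → F, ContDiffAt 𝕜 n r (g t) ∧ ∀ᶠ s in 𝓝 t, r (g s) = s := by
  obtain ⟨π, hπ⟩ := hinv
  have hφ : ContDiffAt 𝕜 n (π ∘ g) t := π.contDiff.contDiffAt.comp t hg
  have hφ' : HasFDerivAt (π ∘ g) (ContinuousLinearEquiv.refl 𝕜 F : F →L[𝕜] F) t := by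
    convert! π.hasFDerivAt.comp t (hg.differentiableAt hn).hasFDerivAt
    ext s
    exact (hπ s).symm
  exact ⟨hφ.localInverse hφ' hn ∘ π,
    (hφ.to_localInverse hφ' hn).comp (g t) π.contDiff.contDiffAt,
    (hφ.hasStrictFDerivAt' hφ' hn).eventually_left_inverse⟩

theorem exists_contDiff_eventuallyEq_of_contDiffAt {E G : Type*}
    [NormedAddCommGroup E] [NormedSpace ℝ E] [HasContDiffBump E]
    [NormedAddCommGroup G] [NormedSpace ℝ G]
    {n : ℕ} {f : E → G} {p : E} {s : Set E} (hf : ContDiffAt ℝ n f p)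
    (hs : ∀ᶠ x in 𝓝 p, x ∈ s → f x = 0) :
    ∃ F : E → G, ContDiff ℝ n F ∧ F =ᶠ[𝓝 p] f ∧ ∀ x ∈ s, F x = 0 := by
  obtain ⟨R, hR, hball⟩ := Metric.nhds_basis_closedBall.eventually_iff.mp
    ((hf.eventually (by simp)).and hs)
  let χ : ContDiffBump p := ⟨R / 2, R, half_pos hR, half_lt_self hR⟩
  have hχ : ∀ x ∈ tsupport χ, ContDiffAt ℝ n f x ∧ (x ∈ s → f x = 0) :=
    fun x hx => hball (χ.tsupport_eq ▸ hx)
  refine ⟨fun x => χ x • f x, contMDiff_iff_contDiff.mp (contMDiff_of_tsupport fun x hx => ?_), ?_,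
    fun x hxs => ?_⟩
  · exact (χ.contDiffAt.smul (hχ x (tsupport_smul_subset_left _ _ hx)).1).contMDiffAt
  · filter_upwards [χ.eventuallyEq_one] with x hx
    simp [hx]
  · by_cases hx : x ∈ tsupport χ
    · simp [(hχ x hx).2 hxs]
    · simp [image_eq_zero_of_notMem_tsupport hx]

theorem fderiv_fderiv_norm_sq_apply_of_eq_zero {E G : Type*}
    [NormedAddCommGroup E] [NormedSpace ℝ E] [NormedAddCommGroup G] [InnerProductSpace ℝ G]
    {H : E → G} {q : E} (hH : ContDiffAt ℝ 2 H q) (hq : H q = 0) (v w : E) :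
    fderiv ℝ (fderiv ℝ fun x => ‖H x‖ ^ 2) q v w =
      2 * inner ℝ (fderiv ℝ H q v) (fderiv ℝ H q w) := by
  have hDH : DifferentiableAt ℝ (fderiv ℝ H) q :=
    (hH.fderiv_right (m := 1) (by norm_num)).differentiableAt one_ne_zero
  have hDρ : DifferentiableAt ℝ (fderiv ℝ fun x => ‖H x‖ ^ 2) q :=
    ((hH.norm_sq ℝ).fderiv_right (m := 1) (by norm_num)).differentiableAt one_ne_zero
  have hfst : (fun x => fderiv ℝ (fun x => ‖H x‖ ^ 2) x w) =ᶠ[𝓝 q]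
      fun x => 2 * inner ℝ (H x) (fderiv ℝ H x w) := by
    filter_upwards [hH.eventually (by simp)] with x hx
    simp [(hx.differentiableAt two_ne_zero).hasFDerivAt.norm_sq.fderiv]
  have hsnd := ((hH.differentiableAt two_ne_zero).hasFDerivAt.inner ℝ
    (hDH.hasFDerivAt.clm_apply (hasFDerivAt_const w q))).const_mul 2
  calc fderiv ℝ (fderiv ℝ fun x => ‖H x‖ ^ 2) q v w
      = fderiv ℝ (fun x => fderiv ℝ (fun x => ‖H x‖ ^ 2) x w) q v := by
        simp [fderiv_clm_apply hDρ (differentiableAt_const w)]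
    _ = fderiv ℝ (fun x => 2 * inner ℝ (H x) (fderiv ℝ H x w)) q v := by rw [hfst.fderiv_eq]
    _ = 2 * inner ℝ (fderiv ℝ H q v) (fderiv ℝ H q w) := by simp [hsnd.fderiv, hq]

end DifferentialCalculus

section LeviForm

variable {E : Type*} [NormedAddCommGroup E] [NormedSpace ℂ E] {ρ : E → ℝ} {x : E}

/-- Strong plurisubharmonicity of `ρ` at `x`: the Levi form is positive definite. As `leviForm` is
defined by `fderiv`, this is only meaningful when `ρ` is twice differentiable at `x`. -/
def IsStronglyPlurisubharmonicAt (ρ : E → ℝ) (x : E) : Prop :=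
  ∀ v, v ≠ 0 → 0 < leviForm ρ x v

theorem leviForm_smul (ρ : E → ℝ) (x v : E) (c : ℝ) :
    leviForm ρ x (c • v) = c ^ 2 * leviForm ρ x v := by
  simp only [leviForm, smul_comm Complex.I c v, map_smul, smul_apply, smul_eq_mul]
  ring

theorem continuousAt_leviForm (hρ : ContDiffAt ℝ 2 ρ x) (v : E) :
    ContinuousAt (fun z : E × E => leviForm ρ z.1 z.2) (x, v) := by
  have hD : ContinuousAt (fderiv ℝ (fderiv ℝ ρ)) x :=
    ((hρ.fderiv_right (m := 1) (by norm_num)).fderiv_right (m := 0) (by norm_num)).continuousAt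
  have hD' : ContinuousAt (fun z : E × E => fderiv ℝ (fderiv ℝ ρ) z.1) (x, v) :=
    ContinuousAt.comp (x := (x, v)) hD continuousAt_fst
  have hI : ContinuousAt (fun z : E × E => Complex.I • z.2) (x, v) :=
    continuousAt_snd.const_smul Complex.I
  exact continuousAt_const.mul (((hD'.clm_apply continuousAt_snd).clm_apply continuousAt_snd).add
    ((hD'.clm_apply hI).clm_apply hI))

theorem IsStronglyPlurisubharmonicAt.eventually [FiniteDimensional ℂ E]
    (h : IsStronglyPlurisubharmonicAt ρ x) (hρ : ContDiffAt ℝ 2 ρ x) :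
    ∀ᶠ y in 𝓝 x, IsStronglyPlurisubharmonicAt ρ y := by
  have : ProperSpace E := FiniteDimensional.proper ℂ E
  have hsphere : ∀ᶠ y in 𝓝 x, ∀ u ∈ Metric.sphere (0 : E) 1, 0 < leviForm ρ y u :=
    (isCompact_sphere 0 1).eventually_forall_of_forall_eventually fun u hu =>
      (continuousAt_leviForm hρ u).eventually
        (lt_mem_nhds (h u (ne_zero_of_mem_unit_sphere ⟨u, hu⟩)))
  filter_upwards [hsphere] with y hy v hv
  have hunit : 0 < leviForm ρ y (‖v‖⁻¹ • v) :=
    hy _ (by simp [norm_smul, norm_ne_zero_iff.mpr hv])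
  rw [leviForm_smul] at hunit
  exact pos_of_mul_pos_right hunit (by positivity)

theorem leviForm_norm_sq_of_eq_zero {G : Type*} [NormedAddCommGroup G] [InnerProductSpace ℝ G]
    {H : E → G} {q : E} (hH : ContDiffAt ℝ 2 H q) (hq : H q = 0) (v : E) :
    leviForm (fun x => ‖H x‖ ^ 2) q v =
      (‖fderiv ℝ H q v‖ ^ 2 + ‖fderiv ℝ H q (Complex.I • v)‖ ^ 2) / 2 := by
  simp only [leviForm, fderiv_fderiv_norm_sq_apply_of_eq_zero hH hq, real_inner_self_eq_norm_sq]
  ring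

end LeviForm

section TotallyReal

variable {E : Type*} [NormedAddCommGroup E] [NormedSpace ℂ E]

/-- A real subspace `T` is totally real if `T ∩ iT = 0`, that is, if it contains no complex line.
Since `-iv ∈ T` whenever `iv ∈ T`, this is tested on the vectors `v ∈ T` with `iv ∈ T`. -/
def IsTotallyReal (T : Submodule ℝ E) : Prop :=
  ∀ v ∈ T, Complex.I • v ∈ T → v = 0

theorem IsTotallyReal.mono {S T : Submodule ℝ E} (hT : IsTotallyReal T) (hST : S ≤ T) :
    IsTotallyReal S :=
  fun v hv hiv => hT v (hST hv) (hST hiv)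

theorem IsTotallyReal.isStronglyPlurisubharmonicAt_norm_sq {G : Type*} [NormedAddCommGroup G]
    [InnerProductSpace ℝ G] {H : E → G} {q : E} (hker : IsTotallyReal (fderiv ℝ H q).ker)
    (hH : ContDiffAt ℝ 2 H q) (hq : H q = 0) :
    IsStronglyPlurisubharmonicAt (fun x => ‖H x‖ ^ 2) q := by
  intro v hv
  rw [leviForm_norm_sq_of_eq_zero hH hq]
  by_cases hv0 : fderiv ℝ H q v = 0
  · have hiv0 : fderiv ℝ H q (Complex.I • v) ≠ 0 := fun hiv0 => hv (hker v hv0 hiv0)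
    positivity
  · positivity

/-- A `C²` embedded totally real submanifold: locally, `M` is parametrized by a `C²` map `g` on an
open subset of some `ℝᵈ` that has a continuous inverse `g'` and whose derivative is injective with
totally real range. The dimension `d` may vary from point to point. -/
def IsTotallyRealSubmanifold (M : Set E) : Prop :=
  ∀ p ∈ M, ∃ V : Set E, IsOpen V ∧ p ∈ V ∧
    ∃ (d : ℕ) (Ω : Set (EuclideanSpace ℝ (Fin d))) (g : EuclideanSpace ℝ (Fin d) → E)
      (g' : E → EuclideanSpace ℝ (Fin d)),
      IsOpen Ω ∧ ContDiffOn ℝ 2 g Ω ∧ g '' Ω = M ∩ V ∧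
      ContinuousOn g' (M ∩ V) ∧ (∀ t ∈ Ω, g' (g t) = t) ∧
      ∀ t ∈ Ω, Function.Injective (fderivWithin ℝ g Ω t) ∧
        IsTotallyReal (fderivWithin ℝ g Ω t).range

/-- `H` is a `C²` map vanishing on `M` that cuts out `M` within `U`, with totally real kernel of
the derivative at the points of `M ∩ U`. This is the vector-valued form of a strongly
plurisubharmonic defining function, which is recovered as `‖H‖²`. -/
structure IsTotallyRealDefiningMap {G : Type*} [NormedAddCommGroup G] [NormedSpace ℝ G]
    (H : E → G) (M U : Set E) : Prop where
  contDiff : ContDiff ℝ 2 H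
  eq_zero_of_mem : ∀ x ∈ M, H x = 0
  mem_of_eq_zero : ∀ x ∈ U, H x = 0 → x ∈ M
  isTotallyReal_ker : ∀ x ∈ M ∩ U, IsTotallyReal (fderiv ℝ H x).ker

variable {M : Set E}

theorem IsTotallyRealSubmanifold.exists_local_retraction [FiniteDimensional ℂ E]
    (hM : IsTotallyRealSubmanifold M) {p : E} (hp : p ∈ M) :
    ∃ ϱ : E → E, ContDiffAt ℝ 2 ϱ p ∧ (∀ᶠ x in 𝓝 p, ϱ x ∈ M) ∧ (∀ᶠ x in 𝓝 p, x ∈ M → ϱ x = x) ∧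
      ∀ᶠ x in 𝓝 p, IsTotallyReal (fderiv ℝ ϱ x).range := by
  have : FiniteDimensional ℝ E := FiniteDimensional.complexToReal E
  obtain ⟨V, hV, hpV, d, Ω, g, g', hΩ, hg, himage, hg', hleft, hDg⟩ := hM p hp
  obtain ⟨t₀, ht₀, rfl⟩ : p ∈ g '' Ω := himage ▸ ⟨hp, hpV⟩
  have hgΩ : ∀ t ∈ Ω, ContDiffAt ℝ 2 g t := fun t ht => hg.contDiffAt (hΩ.mem_nhds ht)
  have hDgΩ : ∀ t ∈ Ω, fderivWithin ℝ g Ω t = fderiv ℝ g t :=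
    fun t ht => fderivWithin_of_isOpen hΩ ht
  obtain ⟨r, hr, hrg⟩ := exists_contDiffAt_leftInverse (hgΩ t₀ ht₀) two_ne_zero
    (.of_injective_of_finiteDimensional (hDgΩ t₀ ht₀ ▸ (hDg t₀ ht₀).1))
  have hr₀ : r (g t₀) = t₀ := hrg.self_of_nhds
  have hrΩ : ∀ᶠ x in 𝓝 (g t₀), r x ∈ Ω :=
    hr.continuousAt.eventually (hr₀.symm ▸ hΩ.mem_nhds ht₀)
  refine ⟨g ∘ r, (hr₀.symm ▸ hgΩ t₀ ht₀ : ContDiffAt ℝ 2 g _).comp (g t₀) hr, ?_, ?_, ?_⟩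
  · filter_upwards [hrΩ] with x hx
    exact (himage.subset ⟨r x, hx, rfl⟩).1
  · have hrg' : ∀ᶠ x in 𝓝[M ∩ V] g t₀, r (g (g' x)) = g' x :=
      (hg' (g t₀) ⟨hp, hpV⟩).eventually ((hleft t₀ ht₀).symm ▸ hrg)
    filter_upwards [eventually_nhdsWithin_iff.mp hrg', hV.mem_nhds hpV] with x hx hxV hxM
    obtain ⟨t, ht, rfl⟩ : x ∈ g '' Ω := himage ▸ ⟨hxM, hxV⟩
    simpa only [Function.comp_apply, hleft t ht] using congrArg g (hx ⟨hxM, hxV⟩)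
  · filter_upwards [hrΩ, hr.eventually (by simp)] with x hx hrx
    rw [fderiv_comp x ((hgΩ _ hx).differentiableAt two_ne_zero) (hrx.differentiableAt two_ne_zero)]
    exact (hDgΩ _ hx ▸ (hDg _ hx).2).mono (LinearMap.range_comp_le_range _ _)

theorem IsTotallyRealSubmanifold.exists_isTotallyRealDefiningMap_nhds [FiniteDimensional ℂ E]
    (hM : IsTotallyRealSubmanifold M) {p : E} (hp : p ∈ M) :
    ∃ H : E → EuclideanSpace ℝ (Fin (Module.finrank ℝ E)),
      ∃ U ∈ 𝓝 p, IsTotallyRealDefiningMap H M U := by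
  have : FiniteDimensional ℝ E := FiniteDimensional.complexToReal E
  obtain ⟨ϱ, hϱ, hϱM, hϱfix, hDϱ⟩ := hM.exists_local_retraction hp
  let h : E → EuclideanSpace ℝ (Fin (Module.finrank ℝ E)) := fun x => toEuclidean (x - ϱ x)
  have hh : ContDiffAt ℝ 2 h p :=
    toEuclidean.contDiff.contDiffAt.comp p (contDiffAt_id.sub hϱ)
  have hh0 : ∀ x, h x = 0 ↔ ϱ x = x := fun x => by
    rw [EmbeddingLike.map_eq_zero_iff, sub_eq_zero, eq_comm]
  obtain ⟨H, hH, hHh, hH0⟩ := exists_contDiff_eventuallyEq_of_contDiffAt (n := 2) hh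
    (hϱfix.mono fun x hx hxM => (hh0 x).mpr (hx hxM))
  refine ⟨H, _, (hϱM.and hDϱ).and (hHh.eventually_nhds.and (hϱ.eventually (by simp))),
    hH, hH0, ?_, ?_⟩
  · rintro x ⟨⟨hxM, -⟩, hHx, -⟩ hx0
    rw [hHx.self_of_nhds, hh0] at hx0
    exact hx0 ▸ hxM
  · rintro x ⟨-, ⟨-, hDx⟩, (hHx : H =ᶠ[𝓝 x] h), hϱx⟩
    refine hDx.mono fun v hv => ⟨v, ?_⟩
    have hDh : HasFDerivAt h _ x := toEuclidean.hasFDerivAt.comp x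
      ((hasFDerivAt_id x).sub (hϱx.differentiableAt two_ne_zero).hasFDerivAt)
    rw [LinearMap.mem_ker, hHx.fderiv_eq, hDh.fderiv] at hv
    exact (sub_eq_zero.mp ((map_eq_zero_iff _ toEuclidean.injective).mp hv)).symm

theorem exists_isTotallyRealDefiningMap_of_isCompact {G : Type*} [NormedAddCommGroup G]
    [NormedSpace ℝ G] (hM : IsCompact M)
    (hloc : ∀ p ∈ M, ∃ H : E → G, ∃ U ∈ 𝓝 p, IsTotallyRealDefiningMap H M U) :
    ∃ (s : Finset E) (H : E → PiLp 2 fun _ : s => G) (U : Set E),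
      IsOpen U ∧ M ⊆ U ∧ IsTotallyRealDefiningMap H M U := by
  choose! H U hU hHU using hloc
  obtain ⟨s, hsM, hMU⟩ := hM.elim_nhds_subcover (fun p => interior (U p)) fun p hp =>
    interior_mem_nhds.mpr (hU p hp)
  have hH : ∀ p : s, IsTotallyRealDefiningMap (H p) M (U p) := fun p => hHU p (hsM p p.2)
  have hmemU : ∀ x ∈ ⋃ p ∈ s, interior (U p), ∃ p : s, x ∈ U p := fun x hx => by
    obtain ⟨p, hp, hxp⟩ := Set.mem_iUnion₂.mp hx
    exact ⟨⟨p, hp⟩, interior_subset hxp⟩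
  let K : E → PiLp 2 fun _ : s => G := fun x => WithLp.toLp 2 fun p => H p x
  have hK : ContDiff ℝ 2 K := contDiff_piLp' 2 fun p => (hH p).contDiff
  have hDK : ∀ x v, ∀ p : s, fderiv ℝ (H p) x v = fderiv ℝ K x v p := fun x v p =>
    congr($(((PiLp.proj (𝕜 := ℝ) 2 (fun _ : s => G) p).hasFDerivAt.comp x
      (hK.differentiable two_ne_zero x).hasFDerivAt).fderiv) v)
  refine ⟨s, K, ⋃ p ∈ s, interior (U p), isOpen_biUnion fun _ _ => isOpen_interior, hMU, hK,
    fun x hx => ?_, fun x hx hx0 => ?_, fun x hx => ?_⟩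
  · ext p
    exact (hH p).eq_zero_of_mem x hx
  · obtain ⟨p, hxp⟩ := hmemU x hx
    exact (hH p).mem_of_eq_zero x hxp congr($hx0 p)
  · obtain ⟨p, hxp⟩ := hmemU x hx.2
    refine ((hH p).isTotallyReal_ker x ⟨hx.1, hxp⟩).mono fun v hv => ?_
    exact (hDK x v p).trans congr($hv p)

end TotallyReal

theorem totally_real_compact_submanifold_has_spsh_defining_function_general {E : Type*}
    [NormedAddCommGroup E] [NormedSpace ℂ E] [FiniteDimensional ℂ E] {M : Set E}
    (hM : IsCompact M) (hreal : IsTotallyRealSubmanifold M) :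
    ∃ U : Set E, IsOpen U ∧ M ⊆ U ∧ ∃ τ : E → ℝ, ContDiff ℝ 2 τ ∧ (∀ x, 0 ≤ τ x) ∧
      (∀ x ∈ U, (τ x = 0 ↔ x ∈ M)) ∧ ∀ x ∈ U, IsStronglyPlurisubharmonicAt τ x := by
  obtain ⟨s, H, U, hU, hMU, hH⟩ := exists_isTotallyRealDefiningMap_of_isCompact hM
    fun _ hp => hreal.exists_isTotallyRealDefiningMap_nhds hp
  have hτ : ContDiff ℝ 2 fun x => ‖H x‖ ^ 2 := hH.contDiff.norm_sq ℝ
  have hopen : IsOpen {x | IsStronglyPlurisubharmonicAt (fun x => ‖H x‖ ^ 2) x} :=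
    isOpen_iff_eventually.mpr fun x hx => hx.eventually hτ.contDiffAt
  refine ⟨_, hU.inter hopen, fun x hx => ⟨hMU hx, ?_⟩, _, hτ, fun x => sq_nonneg ‖H x‖,
    fun x hx => ?_, fun x hx => hx.2⟩
  · exact (hH.isTotallyReal_ker x ⟨hx, hMU hx⟩).isStronglyPlurisubharmonicAt_norm_sq
      hH.contDiff.contDiffAt (hH.eq_zero_of_mem x hx)
  · rw [sq_eq_zero_iff, norm_eq_zero]
    exact ⟨hH.mem_of_eq_zero x hx.1, hH.eq_zero_of_mem x⟩

/-- Let `M ⊆ ℂⁿ` be a compact `C²` embedded totally real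
submanifold: every `p ∈ M` has an open neighborhood `V` in `ℂⁿ` such that `M ∩ V`
is the image of a `C²` map `g` on an open set `Ω ⊆ ℝᵈ` which is a homeomorphism
onto `M ∩ V` (witnessed by a continuous left inverse `g'` on `M ∩ V`), whose
derivative is injective with totally real range at every point of `Ω`. Then there
are an open set `U ⊇ M` and a `C²` function `τ : U → ℝ` with `τ ≥ 0`,
`τ⁻¹(0) = M`, and `τ` strongly plurisubharmonic at every point of `U`. -/
theorem totally_real_compact_submanifold_has_spsh_defining_function
    (n : ℕ) (M : Set (EuclideanSpace ℂ (Fin n))) (hM : IsCompact M)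
    (hchart : ∀ p ∈ M, ∃ V : Set (EuclideanSpace ℂ (Fin n)), IsOpen V ∧ p ∈ V ∧
      ∃ (d : ℕ) (Ω : Set (EuclideanSpace ℝ (Fin d)))
        (g : EuclideanSpace ℝ (Fin d) → EuclideanSpace ℂ (Fin n))
        (g' : EuclideanSpace ℂ (Fin n) → EuclideanSpace ℝ (Fin d)),
        IsOpen Ω ∧ ContDiffOn ℝ 2 g Ω ∧ g '' Ω = M ∩ V ∧
        ContinuousOn g' (M ∩ V) ∧ (∀ t ∈ Ω, g' (g t) = t) ∧
        ∀ t ∈ Ω, Function.Injective ⇑(fderivWithin ℝ g Ω t) ∧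
          ∀ v ∈ Set.range ⇑(fderivWithin ℝ g Ω t),
            Complex.I • v ∈ Set.range ⇑(fderivWithin ℝ g Ω t) → v = 0) :
    ∃ U : Set (EuclideanSpace ℂ (Fin n)), IsOpen U ∧ M ⊆ U ∧
      ∃ τ : EuclideanSpace ℂ (Fin n) → ℝ, ContDiffOn ℝ 2 τ U ∧
        (∀ x ∈ U, 0 ≤ τ x) ∧
        (∀ x ∈ U, (τ x = 0 ↔ x ∈ M)) ∧
        ∀ x ∈ U, ∀ v, v ≠ 0 → 0 < leviForm τ x v := by
  obtain ⟨U, hU, hMU, τ, hτ, hτ_nonneg, hτ_zero, hτ_spsh⟩ :=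
    totally_real_compact_submanifold_has_spsh_defining_function_general hM hchart
  exact ⟨U, hU, hMU, τ, hτ.contDiffOn, fun x _ => hτ_nonneg x, hτ_zero, hτ_spsh⟩
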